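/- For $n \ge 2$, $R > 0$, and $1 < p < 1 + \frac{1}{n-1}$, for every $x' \in \mathbb{R}^n$ with $|x'| < 2R$ and every bounded measurable $V_\delta \subset \mathbb{R}^n$, we have $\int_{V_\delta} \int_{R\hat v + \Pi_v(R)} \Big(\int_0^{2R} \frac{dt}{|x - x' - t\hat v|^{n-1}}\Big)^p dx\, dv \le (2R)^{p/p'}\, \mathrm{Vol}(V_\delta)\, \mathrm{Vol}(\mathbb{S}^{n-1})\, \frac{(4R)^{n - (n-1)p}}{n - (n-1)p}$, where $1/p + 1/p' = 1$. -/

import Mathlib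

open MeasureTheory intervalIntegral
open scoped RealInnerProductSpace

noncomputable section

def hat {n : ℕ} (v : EuclideanSpace ℝ (Fin n)) : EuclideanSpace ℝ (Fin n) := ‖v‖⁻¹ • v

open scoped ENNReal

theorem auxA {n : ℕ} (u : EuclideanSpace ℝ (Fin n)) (hu : ‖u‖ = 1)
   (K : Submodule ℝ (EuclideanSpace ℝ (Fin n))) (hK : K = (ℝ ∙ u))
   (f : EuclideanSpace ℝ (Fin n) → ℝ≥0∞) (hf : Measurable f) :
   ∫⁻ y : ↥Kᗮ, ∫⁻ s : ℝ, f (s • u + (y : EuclideanSpace ℝ (Fin n))) = ∫⁻ z, f z := by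
  subst hK
  let e : WithLp 2 (ℝ × ↥(ℝ ∙ u)ᗮ) ≃ₗᵢ[ℝ] EuclideanSpace ℝ (Fin n) :=
    (LinearIsometryEquiv.withLpProdCongr 2 (LinearIsometryEquiv.toSpanUnitSingleton u hu)
      (LinearIsometryEquiv.refl ℝ _)).trans (ℝ ∙ u).orthogonalDecomposition.symm
  have he : ∀ q : ℝ × ↥(ℝ ∙ u)ᗮ, e (WithLp.toLp 2 q) = q.1 • u + q.2 := by
    intro q
    simp only [e, LinearIsometryEquiv.trans_apply]
    change (ℝ ∙ u).orthogonalDecomposition.symm.toLinearEquiv _ = _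
    rw [Submodule.toLinearEquiv_orthogonalDecomposition_symm]
    simp
  have hmp := (WithLp.volume_preserving_toLp ℝ ↥(ℝ ∙ u)ᗮ)
  have h2 := (e.measurePreserving.comp hmp).lintegral_comp hf
  rw [← h2]
  rw [Measure.volume_eq_prod, lintegral_prod_symm]
  · simp only [Function.comp, he]
  · exact (hf.comp (e.measurePreserving.comp hmp).measurable).aemeasurable

theorem auxB (n : ℕ) (hn : 2 ≤ n) (R : ℝ) (hR : 0 < R)
    (p : ℝ) (hp1 : 1 < p) (hp2 : p < 1 + 1 / (n - 1 : ℝ)) :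
    ∫⁻ z : EuclideanSpace ℝ (Fin n), (Metric.ball 0 R).indicator
      (fun z => ENNReal.ofReal ((1 / ‖z‖ ^ (n - 1)) ^ p)) z = 
      ENNReal.ofReal (((n : ℝ) * (volume (Metric.ball (0 : EuclideanSpace ℝ (Fin n)) 1)).toReal) *
          (R ^ ((n : ℝ) - (n - 1 : ℝ) * p) / ((n : ℝ) - (n - 1 : ℝ) * p))) := by
  have hn' : (2:ℝ) ≤ n := by exact_mod_cast hn
  have hpos : 0 < (n : ℝ) - (n - 1 : ℝ) * p := by
    have h1 : (0:ℝ) < n - 1 := by linarith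
    have := mul_lt_mul_of_pos_left hp2 h1
    have h3 : (n - 1 : ℝ) * (1 + 1 / (n - 1 : ℝ)) = n := by field_simp; ring
    linarith
  have : Nonempty (Fin n) := ⟨⟨0, by omega⟩⟩
  have hpow : ∀ r ∈ Set.Ioo (0:ℝ) R, r ^ (n - 1) • ((1 / r ^ (n - 1)) ^ p : ℝ) =
      r ^ ((n : ℝ) - (n - 1 : ℝ) * p - 1) := by
    intro r hr
    have h0 : 0 < r := hr.1
    rw [one_div, Real.inv_rpow (by positivity), ← Real.rpow_natCast r, ← Real.rpow_mul h0.le,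
      ← Real.rpow_neg h0.le, smul_eq_mul, ← Real.rpow_add h0, Nat.cast_sub (by omega)]
    congr 1
    push_cast; ring
  have hint0 : IntegrableOn (fun r : ℝ => r ^ ((n : ℝ) - (n - 1 : ℝ) * p - 1)) (Set.Ioo 0 R) := by
    rw [← integrableOn_Ioc_iff_integrableOn_Ioo, ← intervalIntegrable_iff_integrableOn_Ioc_of_le hR.le]
    exact intervalIntegral.intervalIntegrable_rpow' (by linarith)
  have hint := (integrableOn_fun_norm_addHaar (volume : Measure (EuclideanSpace ℝ (Fin n)))
      (f := fun r => ((1 / r ^ (n - 1)) ^ p : ℝ)) (r := R)).2 (by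
    rw [finrank_euclideanSpace_fin]
    exact hint0.congr_fun (fun r hr => (hpow r hr).symm) measurableSet_Ioo)
  rw [lintegral_indicator measurableSet_ball, ← ofReal_integral_eq_lintegral_ofReal hint
    (ae_of_all _ fun z => by positivity)]
  congr 1
  have key := integral_fun_norm_addHaar (volume : Measure (EuclideanSpace ℝ (Fin n)))
    ((Set.Iio R).indicator fun r => ((1 / r ^ (n - 1)) ^ p : ℝ))
  have e1 : ∀ z : EuclideanSpace ℝ (Fin n), (Set.Iio R).indicator
      (fun r => ((1 / r ^ (n - 1)) ^ p : ℝ)) ‖z‖ = (Metric.ball 0 R).indicator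
      (fun z => ((1 / ‖z‖ ^ (n - 1)) ^ p : ℝ)) z := by
    intro z; simp [Set.indicator]
  simp_rw [e1] at key
  rw [MeasureTheory.integral_indicator measurableSet_ball] at key
  rw [key, finrank_euclideanSpace_fin, nsmul_eq_mul, smul_eq_mul, ← mul_assoc]
  congr 1
  have e2 : ∀ r : ℝ, r ^ (n - 1) • (Set.Iio R).indicator
      (fun r => ((1 / r ^ (n - 1)) ^ p : ℝ)) r = (Set.Iio R).indicator
      (fun r => r ^ (n - 1) • ((1 / r ^ (n - 1)) ^ p : ℝ)) r := by
    intro z; simp [Set.indicator]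
  simp_rw [e2]
  rw [setIntegral_indicator measurableSet_Iio, Set.Ioi_inter_Iio,
    setIntegral_congr_fun measurableSet_Ioo hpow, ← integral_Ioc_eq_integral_Ioo,
    ← intervalIntegral.integral_of_le hR.le, integral_rpow (Or.inl (by linarith))]
  rw [sub_add_cancel, Real.zero_rpow hpos.ne', sub_zero]

theorem auxH (R : ℝ) (hR : 0 < R) (p p' : ℝ) (hp1 : 1 < p) (hp' : 1 / p + 1 / p' = 1)
    (g : ℝ → ℝ) (hg : Measurable g) (hg0 : ∀ t, 0 ≤ g t) :
    ‖(∫ t in (0:ℝ)..(2 * R), g t) ^ p‖ₑ ≤ ENNReal.ofReal ((2 * R) ^ (p / p')) *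
      ∫⁻ t in Set.Ioo (0:ℝ) (2 * R), ENNReal.ofReal (g t ^ p) := by
  have hp0 : 0 < p := by linarith
  have hc : p.HolderConjugate p' := by
    rw [Real.holderConjugate_iff]
    exact ⟨hp1, by simpa [one_div] using hp'⟩
  have hp'0 : 0 < p' := hc.symm.pos
  have hI0 : 0 ≤ ∫ t in (0:ℝ)..(2 * R), g t :=
    intervalIntegral.integral_nonneg (by linarith) fun t _ => hg0 t
  have h1 : ENNReal.ofReal (∫ t in (0:ℝ)..(2 * R), g t) ≤
      ∫⁻ t in Set.Ioo (0:ℝ) (2 * R), ENNReal.ofReal (g t) := by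
    rw [intervalIntegral.integral_of_le (by linarith), integral_Ioc_eq_integral_Ioo]
    have := enorm_integral_le_lintegral_enorm (μ := volume.restrict (Set.Ioo (0:ℝ) (2 * R))) g
    rw [Real.enorm_of_nonneg (integral_nonneg hg0)] at this
    refine this.trans (le_of_eq (lintegral_congr fun t => Real.enorm_of_nonneg (hg0 t)))
  have h2 := ENNReal.lintegral_mul_le_Lp_mul_Lq (volume.restrict (Set.Ioo (0:ℝ) (2 * R))) hc
    (f := fun t => ENNReal.ofReal (g t)) (g := fun _ => 1) (by fun_prop) (by fun_prop)
  simp only [Pi.mul_apply, mul_one, ENNReal.one_rpow, lintegral_const, one_mul,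
    Measure.restrict_apply_univ, Real.volume_Ioo, sub_zero] at h2
  rw [Real.enorm_of_nonneg (by positivity), ← ENNReal.ofReal_rpow_of_nonneg hI0 hp0.le]
  refine (ENNReal.rpow_le_rpow (h1.trans h2) hp0.le).trans (le_of_eq ?_)
  rw [ENNReal.mul_rpow_of_nonneg _ _ hp0.le, ← ENNReal.rpow_mul, ← ENNReal.rpow_mul,
    one_div_mul_cancel hp0.ne', ENNReal.rpow_one, mul_comm,
    ENNReal.ofReal_rpow_of_nonneg (by positivity) (by positivity), one_div_mul_eq_div]
  congr 1
  exact lintegral_congr fun t => ENNReal.ofReal_rpow_of_nonneg (hg0 t) hp0.le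

theorem auxV (n : ℕ) (hn : 2 ≤ n) (R : ℝ) (hR : 0 < R)
    (p p' : ℝ) (hp1 : 1 < p) (hp2 : p < 1 + 1 / (n - 1 : ℝ))
    (hp' : 1 / p + 1 / p' = 1)
    (x' : EuclideanSpace ℝ (Fin n)) (hx' : ‖x'‖ < 2 * R)
    (v : EuclideanSpace ℝ (Fin n)) (hv : v ≠ 0) :
    ‖∫ y in {y : ↥((ℝ ∙ v)ᗮ) | ‖(y : EuclideanSpace ℝ (Fin n))‖ < R},
        (∫ t in (0:ℝ)..(2 * R),
            1 / ‖(R • hat v + (y : EuclideanSpace ℝ (Fin n))) - x' - t • hat v‖ ^ (n - 1)) ^ p‖ₑ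
      ≤ ENNReal.ofReal ((2 * R) ^ (p / p')) * ENNReal.ofReal (
          ((n : ℝ) * (volume (Metric.ball (0 : EuclideanSpace ℝ (Fin n)) 1)).toReal) *
          ((4 * R) ^ ((n : ℝ) - (n - 1 : ℝ) * p) / ((n : ℝ) - (n - 1 : ℝ) * p))) := by
  have hnv : ‖v‖ ≠ 0 := norm_ne_zero_iff.2 hv
  have hu : ‖hat v‖ = 1 := by
    simp [hat, norm_smul, hnv]
  have hK : (ℝ ∙ v) = (ℝ ∙ hat v) := by
    rw [hat, Submodule.span_singleton_smul_eq (IsUnit.mk0 _ (inv_ne_zero hnv))]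
  set u := hat v with hudef
  set G : EuclideanSpace ℝ (Fin n) → ℝ≥0∞ := (Metric.ball 0 (4 * R)).indicator
      (fun z => ENNReal.ofReal ((1 / ‖z‖ ^ (n - 1)) ^ p)) with hG
  have hGm : Measurable G := Measurable.indicator (by fun_prop) measurableSet_ball
  have hS : MeasurableSet {y : ↥((ℝ ∙ v)ᗮ) | ‖(y : EuclideanSpace ℝ (Fin n))‖ < R} :=
    measurableSet_lt (by fun_prop) (by fun_prop)
  refine (enorm_integral_le_lintegral_enorm _).trans ?_
  have step : ∀ y ∈ {y : ↥((ℝ ∙ v)ᗮ) | ‖(y : EuclideanSpace ℝ (Fin n))‖ < R},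
     ‖(∫ t in (0:ℝ)..(2 * R),
            1 / ‖(R • u + (y : EuclideanSpace ℝ (Fin n))) - x' - t • u‖ ^ (n - 1)) ^ p‖ₑ ≤
      ENNReal.ofReal ((2 * R) ^ (p / p')) *
        ∫⁻ s : ℝ, G (s • u + (y : EuclideanSpace ℝ (Fin n)) - x') := by
    intro y hy
    refine (auxH R hR p p' hp1 hp' _ (by fun_prop) (fun t => by positivity)).trans ?_
    refine mul_le_mul_right ?_ _
    rw [← lintegral_sub_left_eq_self (fun s : ℝ =>
      G (s • u + (y : EuclideanSpace ℝ (Fin n)) - x')) R]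
    refine le_trans ?_ (setLIntegral_le_lintegral (Set.Ioo (0:ℝ) (2 * R)) _)
    refine setLIntegral_mono' measurableSet_Ioo fun t ht => ?_
    have e : (R • u + (y : EuclideanSpace ℝ (Fin n))) - x' - t • u =
      (R - t) • u + (y : EuclideanSpace ℝ (Fin n)) - x' := by
      rw [sub_smul]; abel
    rw [e, hG, Set.indicator_of_mem]
    rw [mem_ball_zero_iff]
    have hy' : ‖(y : EuclideanSpace ℝ (Fin n))‖ < R := hy
    have h1 : ‖(R - t) • u‖ ≤ R := by
      rw [norm_smul, hu, mul_one, Real.norm_eq_abs, abs_le]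
      constructor <;> linarith [ht.1, ht.2]
    have h2 := norm_sub_le ((R - t) • u + (y : EuclideanSpace ℝ (Fin n))) x'
    have h3 := norm_add_le ((R - t) • u) (y : EuclideanSpace ℝ (Fin n))
    linarith
  refine (setLIntegral_mono' hS step).trans ?_
  refine (setLIntegral_le_lintegral _ _).trans ?_
  rw [lintegral_const_mul' _ _ ENNReal.ofReal_ne_top]
  refine mul_le_mul_right ?_ _
  have hA := auxA u hu (ℝ ∙ v) hK (fun z => G (z - x')) (by fun_prop)
  rw [hA, lintegral_sub_right_eq_self (fun z => G z) x', hG,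
    auxB n hn (4 * R) (by positivity) p hp1 hp2]

/-- For `n ≥ 2`, `R > 0`, `1 < p < 1 + 1/(n-1)`, every `x'` with `|x'| < 2R`
and every bounded measurable `V_δ ⊆ ℝⁿ \ {0}`:
`∫_{V_δ} ∫_{R v̂ + Π_v(R)} (∫₀^{2R} dt / |x - x' - t v̂|^{n-1})^p dx dv ≤
  (2R)^{p/p'} Vol(V_δ) Vol(S^{n-1}) (4R)^{n-(n-1)p} / (n-(n-1)p)`,
where `1/p + 1/p' = 1` and `Vol(S^{n-1}) = n·Vol(B(0,1))`. -/
theorem singular_kernel_Lp_bound (n : ℕ) (hn : 2 ≤ n) (R : ℝ) (hR : 0 < R)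
    (p p' : ℝ) (hp1 : 1 < p) (hp2 : p < 1 + 1 / (n - 1 : ℝ))
    (hp' : 1 / p + 1 / p' = 1)
    (x' : EuclideanSpace ℝ (Fin n)) (hx' : ‖x'‖ < 2 * R)
    (Vδ : Set (EuclideanSpace ℝ (Fin n))) (hVmeas : MeasurableSet Vδ)
    (hVbd : Bornology.IsBounded Vδ) (hV0 : ∀ v ∈ Vδ, v ≠ 0) :
    (∫ v in Vδ, ∫ y in {y : ↥((ℝ ∙ v)ᗮ) | ‖(y : EuclideanSpace ℝ (Fin n))‖ < R},
        (∫ t in (0:ℝ)..(2 * R),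
            1 / ‖(R • hat v + (y : EuclideanSpace ℝ (Fin n))) - x' - t • hat v‖ ^ (n - 1)) ^ p)
      ≤ (2 * R) ^ (p / p') * (volume Vδ).toReal *
          ((n : ℝ) * (volume (Metric.ball (0 : EuclideanSpace ℝ (Fin n)) 1)).toReal) *
          ((4 * R) ^ ((n : ℝ) - (n - 1 : ℝ) * p) / ((n : ℝ) - (n - 1 : ℝ) * p)) := by
  have hn' : (2:ℝ) ≤ n := by exact_mod_cast hn
  have hpos : 0 < (n : ℝ) - (n - 1 : ℝ) * p := by
    have h1 : (0:ℝ) < n - 1 := by linarith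
    have := mul_lt_mul_of_pos_left hp2 h1
    have h3 : (n - 1 : ℝ) * (1 + 1 / (n - 1 : ℝ)) = n := by field_simp; ring
    linarith
  have hfin : volume Vδ < ⊤ := hVbd.measure_lt_top
  refine (le_abs_self _).trans ?_
  rw [← Real.norm_eq_abs]
  refine (norm_setIntegral_le_of_norm_le_const (C := (2 * R) ^ (p / p') * (
          ((n : ℝ) * (volume (Metric.ball (0 : EuclideanSpace ℝ (Fin n)) 1)).toReal) *
          ((4 * R) ^ ((n : ℝ) - (n - 1 : ℝ) * p) / ((n : ℝ) - (n - 1 : ℝ) * p)))) hfin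
    fun v hv => ?_).trans (le_of_eq ?_)
  · have h := auxV n hn R hR p p' hp1 hp2 hp' x' hx' v (hV0 v hv)
    rw [← ENNReal.ofReal_mul (by positivity), ← ofReal_norm] at h
    exact (ENNReal.ofReal_le_ofReal_iff (by positivity)).1 h
  · rw [Measure.real]; ring
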